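/- Let α = p/q be an irreducible fraction with 0 < p < q and let (x/r, y/s) be its pair of parents (so q = r + s). Then wt(r/q) = wt(α) and wt(s/q) = −wt(α). -/

import Mathlib

/-- `cf [a₀, a₁, …, aₙ]` is the continued fraction
`a₀ + 1/(a₁ + 1/(a₂ + ⋯ + 1/aₙ))`. -/
def cf : List ℕ → ℚ
  | [] => 0
  | [a] => (a : ℚ)
  | a :: t => (a : ℚ) + 1 / cf t

/-- The alternating sum `a₀ - a₁ + a₂ - ⋯` of a list. -/
def altSum : List ℕ → ℤ
  | [] => 0
  | a :: t => (a : ℤ) - altSum t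

/-- The weight of the continued fraction expansion `[a₀, a₁, …, aₙ]`:
`a₀ - a₁ + a₂ - ⋯ + (-1)ⁿ aₙ` if `n` is even, and
`a₀ - a₁ + a₂ - ⋯ + (-1)ⁿ aₙ + 2` if `n` is odd.  For a positive rational `α`,
`wt(α)` is this common value for any such expansion of `α`. -/
def wtExp (a₀ : ℕ) (t : List ℕ) : ℤ :=
  altSum (a₀ :: t) + (if Even t.length then 0 else 2)

/-- `(x/r, y/s)` is the pair of parents of `α`: they are Farey neighbors
(`x, y ≥ 0`, `r, s ≥ 1`, `r*y - x*s = 1`) and `α` is their Farey mediant. -/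
def IsParents (x r y s : ℕ) (α : ℚ) : Prop :=
  1 ≤ r ∧ 1 ≤ s ∧ r * y = x * s + 1 ∧
    α = ((x : ℚ) + (y : ℚ)) / ((r : ℚ) + (s : ℚ))

lemma cf_cons (a b : ℕ) (t : List ℕ) : cf (a :: b :: t) = a + 1 / cf (b :: t) := by
  simp [cf]

lemma wtExp_cons (a b : ℕ) (t : List ℕ) : wtExp a (b :: t) = a + 2 - wtExp b t := by
  unfold wtExp
  simp only [altSum, List.length_cons, Nat.even_add_one]
  split_ifs <;> omega

lemma cf_nonneg : ∀ (l : List ℕ), 0 ≤ cf l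
  | [] => by simp [cf]
  | [a] => by simp [cf]
  | a :: b :: t => by
    rw [cf_cons]
    have := cf_nonneg (b :: t)
    positivity

lemma cf_ge (a : ℕ) (t : List ℕ) : (a : ℚ) ≤ cf (a :: t) := by
  cases t with
  | nil => simp [cf]
  | cons b t =>
    rw [cf_cons]
    have := cf_nonneg (b :: t)
    have : 0 ≤ 1 / cf (b :: t) := by positivity
    linarith

lemma cf_ge_one (a : ℕ) (t : List ℕ) (ha : 0 < a) : 1 ≤ cf (a :: t) :=
  le_trans (by exact_mod_cast ha) (cf_ge a t)

lemma cf_add (a n : ℕ) (t : List ℕ) : cf ((a + n) :: t) = cf (a :: t) + n := by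
  cases t with
  | nil => simp [cf]
  | cons b t => rw [cf_cons, cf_cons]; push_cast; ring

lemma cf_inv_bd (b : ℕ) (u : List ℕ) (hb : 0 < b) :
    0 < 1 / cf (b :: u) ∧ 1 / cf (b :: u) ≤ 1 := by
  have := cf_ge_one b u hb
  refine ⟨by positivity, ?_⟩
  rw [div_le_one (by linarith)]; exact this

lemma cf_eq_one (b : ℕ) (u : List ℕ) (hb : 0 < b) (hu : ∀ a ∈ u, 0 < a)
    (h : cf (b :: u) = 1) : wtExp b u = 1 := by
  cases u with
  | nil => simp [cf] at h; simp [wtExp, altSum, h]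
  | cons c u =>
    rw [cf_cons] at h
    have := (cf_inv_bd c u (hu c (by simp))).1
    have : (1 : ℚ) ≤ b := by exact_mod_cast hb
    linarith

lemma wt_aux (a a' b : ℕ) (u : List ℕ) (hu : ∀ a ∈ b :: u, 0 < a)
    (h : cf [a] = cf (a' :: b :: u)) : wtExp a [] = wtExp a' (b :: u) := by
  rw [cf_cons] at h
  have h1 := cf_inv_bd b u (hu b (by simp))
  simp only [cf] at h
  have e1 : a' < a := by
    have : (a' : ℚ) < a := by linarith
    exact_mod_cast this
  have e2 : a ≤ a' + 1 := by
    have : (a : ℚ) ≤ a' + 1 := by linarith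
    exact_mod_cast this
  have e : a = a' + 1 := by omega
  subst e
  push_cast at h
  have h2 : 1 / cf (b :: u) = 1 := by linarith
  have h3 : cf (b :: u) = 1 := by
    rw [one_div, inv_eq_one] at h2; exact h2
  have := cf_eq_one b u (hu b (by simp)) (fun a ha => hu a (by simp [ha])) h3
  rw [wtExp_cons, this]
  simp [wtExp, altSum]; ring

lemma wt_unique : ∀ (t t' : List ℕ) (a a' : ℕ), (∀ b ∈ t, 0 < b) → (∀ b ∈ t', 0 < b) →
    cf (a :: t) = cf (a' :: t') → wtExp a t = wtExp a' t'
  | [], [], a, a', _, _, h => by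
    simp [cf] at h; rw [h]
  | [], b :: u, a, a', _, hu, h => wt_aux a a' b u hu h
  | b :: u, [], a, a', hu, _, h => (wt_aux a' a b u hu h.symm).symm
  | b :: u, b' :: u', a, a', hu, hu', h => by
    have h1 := cf_inv_bd b u (hu b (by simp))
    have h2 := cf_inv_bd b' u' (hu' b' (by simp))
    rw [cf_cons, cf_cons] at h
    have e1 : a < a' + 1 := by
      have : (a : ℚ) < a' + 1 := by linarith
      exact_mod_cast this
    have e2 : a' < a + 1 := by
      have : (a' : ℚ) < a + 1 := by linarith
      exact_mod_cast this
    have e : a = a' := by omega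
    subst e
    have h3 : cf (b :: u) = cf (b' :: u') := by
      have : 1 / cf (b :: u) = 1 / cf (b' :: u') := by linarith
      simpa using this
    rw [wtExp_cons, wtExp_cons, wt_unique u u' b b' (fun a ha => hu a (by simp [ha]))
      (fun a ha => hu' a (by simp [ha])) h3]

lemma wt_compl (m k : List ℕ) (hm : ∀ a ∈ m, 0 < a) (hk : ∀ a ∈ k, 0 < a)
    (hm0 : 0 < cf (0 :: m)) (hk0 : 0 < cf (0 :: k)) (h : cf (0 :: m) + cf (0 :: k) = 1) :
    wtExp 0 k = - wtExp 0 m := by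
  match m, hm, hm0, h with
  | [], _, hm0, _ => simp [cf] at hm0
  | 0 :: t, hm, _, _ => simp at hm
  | [1], _, _, h => simp [cf] at h; simp [cf, h] at hk0
  | 1 :: b :: u, hm, _, h =>
    have hb : 0 < b := hm b (by simp)
    have h1 := cf_ge_one b u hb
    have : wtExp 0 k = wtExp 0 ((b + 1) :: u) := by
      apply wt_unique _ _ _ _ hk
      · intro c hc
        simp only [List.mem_cons] at hc
        rcases hc with rfl | hc
        · omega
        · exact hm c (by simp [hc])
      · rw [cf_cons, cf_cons] at h
        rw [cf_cons, cf_add]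
        have e : cf (0 :: k) = 1 - (((0 : ℕ) : ℚ) + 1 / (((1 : ℕ) : ℚ) + 1 / cf (b :: u))) := by
          linarith
        rw [e]
        push_cast
        field_simp
        ring
    rw [this]
    simp only [wtExp_cons]
    have e : wtExp (b + 1) u = wtExp b u + 1 := by
      simp only [wtExp, altSum]; push_cast; ring
    rw [e]; push_cast; ring
  | (a + 2) :: t, hm, _, h =>
    have h1 := cf_ge_one (a + 1) t (by omega)
    have : wtExp 0 k = wtExp 0 (1 :: (a + 1) :: t) := by
      apply wt_unique _ _ _ _ hk
      · intro c hc
        simp only [List.mem_cons] at hc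
        rcases hc with rfl | rfl | hc
        · omega
        · omega
        · exact hm c (by simp [hc])
      · rw [cf_cons, show a + 2 = (a + 1) + 1 from rfl, cf_add (a + 1) 1] at h
        rw [cf_cons, cf_cons]
        have e : cf (0 :: k) = 1 - (((0 : ℕ) : ℚ) + 1 / (cf ((a + 1) :: t) + ((1 : ℕ) : ℚ))) := by
          linarith
        rw [e]
        push_cast
        field_simp
        ring
    rw [this]
    simp only [wtExp_cons]
    have e : wtExp (a + 2) t = wtExp (a + 1) t + 1 := by
      simp only [wtExp, altSum]; push_cast; ring
    rw [e]; push_cast; ring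

lemma exists_odd : ∀ (l : List ℕ), (∀ a ∈ l, 0 < a) → l ≠ [] →
    ∃ l' : List ℕ, (∀ a ∈ l', 0 < a) ∧ Odd l'.length ∧ cf l' = cf l
  | [], _, h => absurd rfl h
  | [a], h, _ => ⟨[a], h, by simp, rfl⟩
  | [a, 0], h, _ => by simp at h
  | [a, 1], h, _ => ⟨[a + 1], by simp, by simp, by simp [cf]⟩
  | [a, b + 2], h, _ => ⟨[a, b + 1, 1], by simpa using h, ⟨1, rfl⟩, by
      simp [cf]; ring⟩
  | a :: b :: c :: t, h, _ => by
    obtain ⟨l', h1, h2, h3⟩ := exists_odd (c :: t) (fun x hx => h x (by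
      simp only [List.mem_cons] at hx ⊢; tauto)) (by simp)
    cases l' with
    | nil => simp at h2
    | cons d u =>
      refine ⟨a :: b :: d :: u, ?_, ?_, ?_⟩
      · intro x hx
        simp only [List.mem_cons] at hx
        rcases hx with rfl | rfl | hx
        · exact h _ (by simp)
        · exact h _ (by simp)
        · exact h1 _ (by simpa using hx)
      · simp only [List.length_cons] at h2 ⊢
        grind
      · rw [cf_cons, cf_cons, cf_cons, cf_cons, h3]

def cfA (a : ℕ) : Matrix (Fin 2) (Fin 2) ℤ := !![(a : ℤ), 1; 1, 0]

def cfP (l : List ℕ) : Matrix (Fin 2) (Fin 2) ℤ := (l.map cfA).prod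

lemma cfP_cons (a : ℕ) (t : List ℕ) : cfP (a :: t) = cfA a * cfP t := by simp [cfP]

lemma cfP00 (a : ℕ) (t : List ℕ) : cfP (a :: t) 0 0 = a * cfP t 0 0 + cfP t 1 0 := by
  simp [cfP_cons, cfA, Matrix.mul_apply, Fin.sum_univ_two]

lemma cfP10 (a : ℕ) (t : List ℕ) : cfP (a :: t) 1 0 = cfP t 0 0 := by
  simp [cfP_cons, cfA, Matrix.mul_apply, Fin.sum_univ_two]

lemma cfP_reverse (l : List ℕ) : cfP l.reverse = (cfP l).transpose := by
  unfold cfP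
  rw [Matrix.transpose_list_prod, List.map_reverse, List.map_map]
  congr 3
  funext a
  ext i j
  fin_cases i <;> fin_cases j <;> simp [cfA]

lemma cfP_det (l : List ℕ) : (cfP l).det = (-1) ^ l.length := by
  induction l with
  | nil => simp [cfP]
  | cons a t ih =>
    rw [cfP_cons, Matrix.det_mul, ih]
    simp [cfA, Matrix.det_fin_two, pow_succ]

lemma cfP_pos (l : List ℕ) (h : ∀ a ∈ l, 0 < a) : 0 < cfP l 0 0 ∧ 0 ≤ cfP l 1 0 := by
  induction l with
  | nil => simp [cfP]
  | cons a t ih =>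
    have ih := ih (fun x hx => h x (by simp [hx]))
    have ha : 0 < a := h a (by simp)
    have ha : (0 : ℤ) < a := by exact_mod_cast ha
    rw [cfP00, cfP10]
    exact ⟨by nlinarith, ih.1.le⟩

lemma cf_eq (t : List ℕ) : ∀ (a : ℕ), (∀ a ∈ t, 0 < a) →
    cf (a :: t) = (cfP (a :: t) 0 0 : ℚ) / (cfP (a :: t) 1 0 : ℚ) := by
  induction t with
  | nil => intro a _; simp [cf, cfP, cfA]
  | cons b t ih =>
    intro a h
    rw [cf_cons, ih b (fun x hx => h x (by simp [hx])), cfP00 a, cfP10 a]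
    have := (cfP_pos _ h).1
    have : (0 : ℚ) < cfP (b :: t) 0 0 := by exact_mod_cast this
    push_cast
    field_simp

lemma cf0_eq (t : List ℕ) (h : ∀ a ∈ t, 0 < a) :
    cf (0 :: t) = (cfP t 1 0 : ℚ) / (cfP t 0 0 : ℚ) := by
  rw [cf_eq t 0 h, cfP00, cfP10]; simp

lemma altSum_append (l l' : List ℕ) :
    altSum (l ++ l') = altSum l + (-1) ^ l.length * altSum l' := by
  induction l with
  | nil => simp [altSum]
  | cons a t ih => simp only [List.cons_append, altSum, ih, List.length_cons, pow_succ]; ring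

lemma altSum_reverse (l : List ℕ) : altSum l.reverse = (-1) ^ (l.length + 1) * altSum l := by
  induction l with
  | nil => simp [altSum]
  | cons a t ih =>
    rw [List.reverse_cons, altSum_append, ih]
    simp only [altSum, List.length_cons, List.length_reverse, pow_succ]
    ring

lemma wtExp_reverse (l : List ℕ) (h : Odd l.length) : wtExp 0 l.reverse = wtExp 0 l := by
  simp only [wtExp, altSum, altSum_reverse, List.length_reverse]
  rw [Even.neg_one_pow (Odd.add_one h)]; simp

lemma cfP_bd (l : List ℕ) (h : ∀ a ∈ l, 0 < a) (hn : l ≠ []) :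
    0 < cfP l 1 0 ∧ cfP l 1 0 ≤ cfP l 0 0 := by
  cases l with
  | nil => simp at hn
  | cons a t =>
    have h1 := cfP_pos t (fun x hx => h x (by simp [hx]))
    have ha : 0 < a := h a (by simp)
    have ha : (1 : ℤ) ≤ a := by exact_mod_cast ha
    rw [cfP00, cfP10]
    exact ⟨h1.1, by nlinarith⟩

lemma frac_unique (a b c d : ℤ) (hb : 0 < b) (hd : 0 < d) (h1 : IsCoprime a b)
    (h2 : IsCoprime c d) (h : (a : ℚ) / b = c / d) : a = c ∧ b = d := by
  have hb' : (0 : ℚ) < b := by exact_mod_cast hb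
  have hd' : (0 : ℚ) < d := by exact_mod_cast hd
  rw [div_eq_div_iff hb'.ne' hd'.ne'] at h
  have h : a * d = c * b := by exact_mod_cast h
  have e1 : b ∣ d := h1.symm.dvd_of_dvd_mul_left ⟨c, by rw [h]; ring⟩
  have e2 : d ∣ b := h2.symm.dvd_of_dvd_mul_left ⟨a, by rw [← h]; ring⟩
  have e : b = d := Int.dvd_antisymm hb.le hd.le e1 e2
  subst e
  exact ⟨mul_right_cancel₀ hb.ne' h, rfl⟩

/-- let `α = p/q` be irreducible with `0 < p < q` and pair of parents
`(x/r, y/s)` (so `q = r + s`).  Then `wt(r/q) = wt(α)` and `wt(s/q) = -wt(α)`;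
i.e. for any continued fraction expansions `[0, l] = α`, `[0, m] = r/q` and
`[0, k] = s/q` with positive partial quotients, the corresponding weights satisfy
these relations. -/
theorem wt_parents (p q x r y s : ℕ) (hp : 0 < p) (hpq : p < q)
    (hcop : Nat.Coprime p q)
    (hpar : IsParents x r y s ((p : ℚ) / (q : ℚ)))
    (l m k : List ℕ) (hl : ∀ a ∈ l, 0 < a) (hm : ∀ a ∈ m, 0 < a)
    (hk : ∀ a ∈ k, 0 < a)
    (hcl : cf (0 :: l) = (p : ℚ) / (q : ℚ))
    (hcm : cf (0 :: m) = (r : ℚ) / (q : ℚ))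
    (hck : cf (0 :: k) = (s : ℚ) / (q : ℚ)) :
    wtExp 0 m = wtExp 0 l ∧ wtExp 0 k = -wtExp 0 l := by
  obtain ⟨hr, hs, hdet, hα⟩ := hpar
  have hpq0 : IsCoprime (p : ℤ) q := Nat.isCoprime_iff_coprime.mpr hcop
  have hdet' : (r : ℤ) * y = x * s + 1 := by exact_mod_cast hdet
  have hxy : IsCoprime ((x : ℤ) + y) (r + s) := ⟨r, -x, by linear_combination hdet'⟩
  have hfr := frac_unique p q (x + y) (r + s) (by omega) (by omega) hpq0 hxy
    (by push_cast; exact hα)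
  obtain ⟨e1, e2⟩ := hfr
  have hq0 : (0 : ℚ) < q := by exact_mod_cast (by omega : 0 < q)
  have hr0 : (0 : ℚ) < r := by exact_mod_cast hr
  have hs0 : (0 : ℚ) < s := by exact_mod_cast hs
  have hp0 : (0 : ℚ) < p := by exact_mod_cast hp
  have e2q : (q : ℚ) = r + s := by exact_mod_cast e2
  have hmk : wtExp 0 k = - wtExp 0 m := by
    apply wt_compl m k hm hk
    · rw [hcm]; positivity
    · rw [hck]; positivity
    · rw [hcm, hck, ← add_div, ← e2q, div_self hq0.ne']
  suffices H : wtExp 0 m = wtExp 0 l from ⟨H, by rw [hmk, H]⟩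
  have hl0 : l ≠ [] := by
    rintro rfl
    simp only [cf, Nat.cast_zero] at hcl
    have : (0 : ℚ) < p / q := by positivity
    linarith
  obtain ⟨l', hl', hodd, hcf⟩ := exists_odd l hl hl0
  have hl'0 : l' ≠ [] := by rintro rfl; simp at hodd
  have hcl' : cf (0 :: l') = cf (0 :: l) := by
    cases l with
    | nil => simp at hl0
    | cons a t =>
      cases l' with
      | nil => simp at hl'0
      | cons b u => rw [cf_cons, cf_cons, hcf]
  rw [← wt_unique l' l 0 0 hl' hl hcl', ← wtExp_reverse l' hodd]
  have hrev : ∀ a ∈ l'.reverse, 0 < a := fun a ha => hl' a (by simpa using ha)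
  apply wt_unique _ _ _ _ hm hrev
  rw [hcm, cf0_eq _ hrev, cfP_reverse]
  have hb := cfP_bd _ hrev (by simpa using hl'0)
  rw [cfP_reverse] at hb
  simp only [Matrix.transpose_apply] at hb ⊢
  have hd := cfP_det l'
  rw [hodd.neg_one_pow, Matrix.det_fin_two] at hd
  rw [hcl, cf0_eq _ hl'] at hcl'
  obtain ⟨f1, f2⟩ := frac_unique (cfP l' 1 0) (cfP l' 0 0) p q (cfP_pos _ hl').1 (by omega)
    ⟨cfP l' 0 1, -cfP l' 1 1, by linear_combination -hd⟩ hpq0 (by push_cast; exact hcl')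
  rw [f2] at hb hd ⊢
  rw [f1] at hd
  have hdvd : (q : ℤ) ∣ cfP l' 0 1 - r := by
    have : IsCoprime (q : ℤ) p := hpq0.symm
    apply this.dvd_of_dvd_mul_left
    refine ⟨cfP l' 1 1 - x, ?_⟩
    linear_combination -hd - r * e1 + x * e2 - hdet'
  have : cfP l' 0 1 - r = 0 := by
    apply Int.eq_zero_of_abs_lt_dvd hdvd
    rw [abs_lt]; constructor <;> omega
  have : cfP l' 0 1 = r := by omega
  rw [this]; simp
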